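/- Let r_1, r_2 > 0 and let a, b be positive integers with a r_2 = b r_1. Let F : ℝ → ℝ be a smooth 2π-periodic function and define u(s_1, s_2) = F(a s_1/r_1 + b s_2/r_2). Then ∂_1∂_1 u − ∂_2∂_2 u vanishes identically, and ∫_{[0,2πr_1]×[0,2πr_2]} ( ( ∂_1∂_1 u − ∂_2∂_2 u )² − (∂_1 u)²/r_1² − (∂_2 u)²/r_2² − 2 (∂_1 u)(∂_2 u)/(r_1 r_2) ) = − ( a/r_1² + b/r_2² )² ∫_{[0,2πr_1]×[0,2πr_2]} F′(a s_1/r_1 + b s_2/r_2)². In particular this quantity is strictly negative whenever F is non-constant. -/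

import Mathlib

open MeasureTheory Real

/-- Partial derivative of `u : ℝ² → ℝ` in the first coordinate. -/
noncomputable def pdS (u : ℝ × ℝ → ℝ) (x : ℝ × ℝ) : ℝ := fderiv ℝ u x (1, 0)

/-- Partial derivative of `u : ℝ² → ℝ` in the second coordinate. -/
noncomputable def pdT (u : ℝ × ℝ → ℝ) (x : ℝ × ℝ) : ℝ := fderiv ℝ u x (0, 1)

/-
A plane wave `u(s₁, s₂) = F(p s₁ + q s₂)` satisfies `∂₁u = p F'`, `∂₂u = q F'` and
`∂₁∂₁u - ∂₂∂₂u = (p² - q²) F''`. The first-order terms of the second variation form the perfect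
square `(∂₁u/r₁ + ∂₂u/r₂)² = (p/r₁ + q/r₂)² F'²`, so a plane wave in a null direction `p² = q²` has
second variation `-(p/r₁ + q/r₂)² ∫ F'²`. If `F` is periodic and non-constant, then `F'` is nonzero
at some point of every interval of length one period. The phase of `u` varies by `2π(a + b)`
between opposite corners of the rectangle, so it covers such an interval by connectedness, and
`∫ F'²` is positive.
-/

section PositiveIntegral

variable {X : Type*} [TopologicalSpace X]

lemma setIntegral_pos_of_continuousOn [MeasurableSpace X] [OpensMeasurableSpace X] [T2Space X]
    {μ : Measure X} [μ.IsOpenPosMeasure] [IsFiniteMeasureOnCompacts μ] {K : Set X}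
    (hK : IsCompact K) (hK_int : K ⊆ closure (interior K)) {f : X → ℝ} (hf : ContinuousOn f K)
    (hf_nonneg : ∀ x ∈ K, 0 ≤ f x) {x : X} (hx : x ∈ K) (hfx : f x ≠ 0) :
    0 < ∫ y in K, f y ∂μ := by
  refine (setIntegral_nonneg hK.measurableSet hf_nonneg).lt_of_ne' fun h_zero => hfx ?_
  have h_ae : f =ᵐ[μ.restrict K] 0 :=
    (setIntegral_eq_zero_iff_of_nonneg_ae (ae_restrict_of_forall_mem hK.measurableSet hf_nonneg)
      (hf.integrableOn_compact hK)).1 h_zero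
  exact Measure.eqOn_of_ae_eq h_ae hf continuousOn_const hK_int hx

lemma exists_mem_comp_eq_of_periodic {α : Type*} {f : ℝ → α} {T : ℝ} (hf : Function.Periodic f T)
    (hT : 0 < T) {K : Set X} (hK : IsPreconnected K) {φ : X → ℝ} (hφ : ContinuousOn φ K)
    {x y : X} (hx : x ∈ K) (hy : y ∈ K) (h_var : T ≤ |φ y - φ x|) (t : ℝ) :
    ∃ z ∈ K, f (φ z) = f t := by
  obtain ⟨t', ⟨ht'_ge, ht'_lt⟩, h_eq⟩ := hf.exists_mem_Ico hT t (min (φ x) (φ y))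
  have ht'_mem : t' ∈ Set.uIcc (φ x) (φ y) := by
    refine ⟨ht'_ge, ?_⟩
    linarith [max_sub_min_eq_abs (φ x) (φ y)]
  obtain ⟨z, hz, rfl⟩ := (hK.image φ hφ).ordConnected.uIcc_subset
    (Set.mem_image_of_mem φ hx) (Set.mem_image_of_mem φ hy) ht'_mem
  exact ⟨z, hz, h_eq.symm⟩

end PositiveIntegral

lemma periodic_deriv_of_periodic {𝕜 E : Type*} [NontriviallyNormedField 𝕜] [NormedAddCommGroup E]
    [NormedSpace 𝕜 E] {f : 𝕜 → E} {T : 𝕜} (hf : Function.Periodic f T) :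
    Function.Periodic (deriv f) T := fun t => by
  rw [← deriv_comp_add_const, hf.funext]

/-- The plane wave with profile `F` and constant covector `(p, q)`. -/
def planeWave (p q : ℝ) (F : ℝ → ℝ) (x : ℝ × ℝ) : ℝ := F (p * x.1 + q * x.2)

/-- The wave operator `∂₁∂₁ - ∂₂∂₂`, which is the Laplacian of the flat metric induced on the torus
by the indefinite Hermitian form. -/
noncomputable def waveOperator (u : ℝ × ℝ → ℝ) (x : ℝ × ℝ) : ℝ :=
  pdS (pdS u) x - pdT (pdT u) x

/-- The rectangle whose side lengths are the circumferences of the circles of radii `r₁` and `r₂`;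
it represents the torus `S¹(r₁) × S¹(r₂)` in arc-length coordinates. -/
def torusRectangle (r₁ r₂ : ℝ) : Set (ℝ × ℝ) :=
  Set.Icc 0 (2 * π * r₁) ×ˢ Set.Icc 0 (2 * π * r₂)

/-- The second variation of the area of the torus `S¹(r₁) × S¹(r₂)` under the Hamiltonian
variation with potential `u`. The potential is a function on the plane, and only its restriction
to `torusRectangle r₁ r₂` matters. -/
noncomputable def torusSecondVariation (r₁ r₂ : ℝ) (u : ℝ × ℝ → ℝ) : ℝ :=
  ∫ x in torusRectangle r₁ r₂,
    (waveOperator u x ^ 2 - pdS u x ^ 2 / r₁ ^ 2 - pdT u x ^ 2 / r₂ ^ 2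
      - 2 * pdS u x * pdT u x / (r₁ * r₂))

section PlaneWave

variable {p q : ℝ} {F : ℝ → ℝ}

lemma hasFDerivAt_planeWave {x : ℝ × ℝ} (hF : DifferentiableAt ℝ F (p * x.1 + q * x.2)) :
    HasFDerivAt (planeWave p q F)
      (planeWave p q (deriv F) x •
        (p • ContinuousLinearMap.fst ℝ ℝ ℝ + q • ContinuousLinearMap.snd ℝ ℝ ℝ)) x :=
  hF.hasDerivAt.comp_hasFDerivAt x
    ((hasFDerivAt_fst.const_mul p).add (hasFDerivAt_snd.const_mul q))

lemma pdS_planeWave (hF : Differentiable ℝ F) :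
    pdS (planeWave p q F) = planeWave p q (p • deriv F) := by
  ext x
  simp [pdS, (hasFDerivAt_planeWave (hF _)).fderiv, planeWave, mul_comm]

lemma pdT_planeWave (hF : Differentiable ℝ F) :
    pdT (planeWave p q F) = planeWave p q (q • deriv F) := by
  ext x
  simp [pdT, (hasFDerivAt_planeWave (hF _)).fderiv, planeWave, mul_comm]

lemma waveOperator_planeWave (hF : Differentiable ℝ F) (hF' : Differentiable ℝ (deriv F)) :
    waveOperator (planeWave p q F) = (p ^ 2 - q ^ 2) • planeWave p q (deriv (deriv F)) := by
  ext x
  simp only [waveOperator, pdS_planeWave hF, pdT_planeWave hF, pdS_planeWave (hF'.const_smul p),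
    pdT_planeWave (hF'.const_smul q), planeWave, Pi.smul_apply, smul_eq_mul,
    deriv_const_smul_field]
  ring

lemma torusSecondVariation_planeWave (r₁ r₂ : ℝ) (hF : Differentiable ℝ F)
    (hF' : Differentiable ℝ (deriv F)) (hpq : p ^ 2 = q ^ 2) :
    torusSecondVariation r₁ r₂ (planeWave p q F) =
      -(p / r₁ + q / r₂) ^ 2 * ∫ x in torusRectangle r₁ r₂, planeWave p q (deriv F) x ^ 2 := by
  rw [torusSecondVariation, ← integral_const_mul]
  congr 1 with x
  simp only [waveOperator_planeWave hF hF', pdS_planeWave hF, pdT_planeWave hF, planeWave, hpq,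
    Pi.smul_apply, smul_eq_mul, sub_self]
  ring

lemma setIntegral_sq_planeWave_deriv_pos {L₁ L₂ T : ℝ} (hL₁ : 0 < L₁) (hL₂ : 0 < L₂)
    (hT : 0 < T) (hF : ContDiff ℝ 1 F) (hF_per : Function.Periodic F T)
    (hF_const : ¬ ∃ c, ∀ t, F t = c) (h_var : T ≤ |p * L₁ + q * L₂|) :
    0 < ∫ x in Set.Icc 0 L₁ ×ˢ Set.Icc 0 L₂, planeWave p q (deriv F) x ^ 2 := by
  obtain ⟨t, ht⟩ : ∃ t, deriv F t ≠ 0 := by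
    by_contra! h
    exact hF_const ⟨F 0, fun s => is_const_of_deriv_eq_zero (hF.differentiable one_ne_zero) h s 0⟩
  have h_cont : Continuous fun x : ℝ × ℝ => planeWave p q (deriv F) x ^ 2 :=
    ((hF.continuous_deriv le_rfl).comp (by fun_prop)).pow 2
  obtain ⟨z, hz, hzt⟩ : ∃ z ∈ Set.Icc 0 L₁ ×ˢ Set.Icc 0 L₂, planeWave p q (deriv F) z = deriv F t :=
    exists_mem_comp_eq_of_periodic (periodic_deriv_of_periodic hF_per) hT
      (isPreconnected_Icc.prod isPreconnected_Icc)
      (φ := fun x : ℝ × ℝ => p * x.1 + q * x.2) (by fun_prop) (x := (0, 0)) (y := (L₁, L₂))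
      (by simp [hL₁.le, hL₂.le]) (by simp [hL₁.le, hL₂.le]) (by simpa using h_var) t
  refine setIntegral_pos_of_continuousOn (isCompact_Icc.prod isCompact_Icc) ?_
    h_cont.continuousOn (fun x _ => sq_nonneg _) hz (pow_ne_zero 2 (hzt ▸ ht))
  rw [interior_prod_eq, closure_prod_eq, closure_interior_Icc hL₁.ne, closure_interior_Icc hL₂.ne]

end PlaneWave

theorem torus_second_variation_negative_direction_general {r₁ r₂ a b : ℝ} (hr₁ : 0 < r₁)
    (hr₂ : 0 < r₂) (h_wind : 1 ≤ |a + b|) (hab : a * r₂ = b * r₁) {F : ℝ → ℝ} (hF : ContDiff ℝ 2 F)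
    (hF_per : Function.Periodic F (2 * π)) {u : ℝ × ℝ → ℝ}
    (hu : u = fun x => F (a * x.1 / r₁ + b * x.2 / r₂)) :
    (∀ x, waveOperator u x = 0) ∧
    torusSecondVariation r₁ r₂ u =
      -(a / r₁ ^ 2 + b / r₂ ^ 2) ^ 2 *
        ∫ x in torusRectangle r₁ r₂, deriv F (a * x.1 / r₁ + b * x.2 / r₂) ^ 2 ∧
    ((¬ ∃ c, ∀ s, F s = c) → torusSecondVariation r₁ r₂ u < 0) := by
  have h_planeWave (G : ℝ → ℝ) (x : ℝ × ℝ) :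
      G (a * x.1 / r₁ + b * x.2 / r₂) = planeWave (a / r₁) (b / r₂) G x := by
    simp only [planeWave, div_mul_eq_mul_div]
  obtain rfl : u = planeWave (a / r₁) (b / r₂) F := hu.trans (funext (h_planeWave F))
  have hF₁ : Differentiable ℝ F := hF.differentiable two_ne_zero
  have hF₂ : Differentiable ℝ (deriv F) := hF.differentiable_deriv_two
  have h_null : (a / r₁) ^ 2 = (b / r₂) ^ 2 := by
    rw [(div_eq_div_iff hr₁.ne' hr₂.ne').2 hab]
  have h_second_var := torusSecondVariation_planeWave r₁ r₂ hF₁ hF₂ h_null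
  rw [div_div, div_div, ← sq, ← sq] at h_second_var
  refine ⟨fun x => ?_, ?_, fun hF_const => ?_⟩
  · simp [waveOperator_planeWave hF₁ hF₂, h_null]
  · simpa only [h_planeWave] using h_second_var
  · have h_coeff : a / r₁ ^ 2 + b / r₂ ^ 2 = (a + b) / (r₁ * r₂) := by
      field_simp
      linear_combination (r₂ - r₁) * hab
    have h_phase : a / r₁ * (2 * π * r₁) + b / r₂ * (2 * π * r₂) = 2 * π * (a + b) := by
      field_simp
    have h_sum : a + b ≠ 0 := abs_pos.1 (one_pos.trans_le h_wind)
    rw [h_second_var, h_coeff, neg_mul, neg_lt_zero]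
    refine mul_pos (by positivity) (setIntegral_sq_planeWave_deriv_pos (by positivity)
      (by positivity) two_pi_pos (hF.of_le one_le_two) hF_per hF_const ?_)
    rw [h_phase, abs_mul, abs_of_pos two_pi_pos]
    exact le_mul_of_one_le_right two_pi_pos.le h_wind

/-- Negative direction for the torus `S¹(r₁) × S¹(r₂) ⊂ ℂ²` with the neutral
Hermitian form, coming from solutions `u(s₁,s₂) = F(a s₁/r₁ + b s₂/r₂)` of the wave equation:
`∂₁∂₁u − ∂₂∂₂u ≡ 0`, the second variation equals
`−(a/r₁² + b/r₂²)² ∫ F′(a s₁/r₁ + b s₂/r₂)²`, and it is strictly negative if `F` is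
non-constant. -/
theorem torus_second_variation_negative_direction
    (r₁ r₂ : ℝ) (hr₁ : 0 < r₁) (hr₂ : 0 < r₂)
    (a b : ℕ) (ha : 0 < a) (hb : 0 < b) (hab : (a : ℝ) * r₂ = (b : ℝ) * r₁)
    (F : ℝ → ℝ) (hF : ContDiff ℝ (⊤ : ℕ∞) F) (hFper : Function.Periodic F (2 * π))
    (u : ℝ × ℝ → ℝ) (hu : u = fun x => F ((a : ℝ) * x.1 / r₁ + (b : ℝ) * x.2 / r₂)) :
    (∀ x, pdS (pdS u) x - pdT (pdT u) x = 0) ∧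
    (∫ x in Set.Icc (0 : ℝ) (2 * π * r₁) ×ˢ Set.Icc (0 : ℝ) (2 * π * r₂),
        ((pdS (pdS u) x - pdT (pdT u) x) ^ 2 - (pdS u x) ^ 2 / r₁ ^ 2
          - (pdT u x) ^ 2 / r₂ ^ 2 - 2 * (pdS u x) * (pdT u x) / (r₁ * r₂)))
      = -((a : ℝ) / r₁ ^ 2 + (b : ℝ) / r₂ ^ 2) ^ 2 *
          ∫ x in Set.Icc (0 : ℝ) (2 * π * r₁) ×ˢ Set.Icc (0 : ℝ) (2 * π * r₂),
            (deriv F ((a : ℝ) * x.1 / r₁ + (b : ℝ) * x.2 / r₂)) ^ 2 ∧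
    ((¬ ∃ c : ℝ, ∀ s, F s = c) →
      (∫ x in Set.Icc (0 : ℝ) (2 * π * r₁) ×ˢ Set.Icc (0 : ℝ) (2 * π * r₂),
        ((pdS (pdS u) x - pdT (pdT u) x) ^ 2 - (pdS u x) ^ 2 / r₁ ^ 2
          - (pdT u x) ^ 2 / r₂ ^ 2 - 2 * (pdS u x) * (pdT u x) / (r₁ * r₂))) < 0) :=
  torus_second_variation_negative_direction_general hr₁ hr₂
    (le_abs.2 (.inl (by exact_mod_cast Nat.le_add_right_of_le ha))) hab (contDiff_infty.1 hF 2)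
    hFper hu
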